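/- Let H be a nilpotent group and K a proper subgroup of H (K ≠ H). Then there exist an abelian group G and a group homomorphism φ : H → G such that φ is surjective, φ is not the trivial homomorphism, and K is contained in the kernel of φ. -/

import Mathlib

/-- If `K` is a proper subgroup of a nilpotent group `H`, then there is a surjective, nontrivial
homomorphism `φ` from `H` to an abelian group `G` with `K` contained in the kernel of `φ`. -/
theorem exists_surjective_nontrivial_hom_to_abelian_of_ne_top
    {H : Type u} [Group H] [Group.IsNilpotent H]
    (K : Subgroup H) (hK : K ≠ ⊤) :
    ∃ (G : Type u) (inst : CommGroup G),
      letI := inst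
      ∃ φ : H →* G, Function.Surjective φ ∧ φ ≠ 1 ∧ K ≤ φ.ker := by
  obtain ⟨n, hn⟩ := Group.IsNilpotent.nilpotent H
  have hex : ∃ m, K ⊔ Subgroup.upperCentralSeries H m = ⊤ := ⟨n, by rw [hn]; simp⟩
  classical
  obtain ⟨i, hi, hi'⟩ : ∃ i, K ⊔ Subgroup.upperCentralSeries H i ≠ ⊤ ∧
      K ⊔ Subgroup.upperCentralSeries H (i + 1) = ⊤ := by
    by_contra hcon
    push Not at hcon
    obtain ⟨m, hm⟩ := hex
    have : ∀ j, K ⊔ Subgroup.upperCentralSeries H j ≠ ⊤ := by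
      intro j
      induction j with
      | zero => simpa using hK
      | succ j ih => exact hcon j ih
    exact this m hm
  set L := K ⊔ Subgroup.upperCentralSeries H i with hL
  have hZ : ∀ z ∈ Subgroup.upperCentralSeries H (i + 1), ∀ g : H, z * g * z⁻¹ * g⁻¹ ∈ L := by
    intro z hz g
    exact (le_sup_right : _ ≤ L) (Subgroup.mem_upperCentralSeries_succ_iff.1 hz g)
  have hKL : K ≤ L := le_sup_left
  have hN : L.Normal := by
    rw [← Subgroup.normalizer_eq_top_iff, eq_top_iff, ← hi']
    refine sup_le (hKL.trans Subgroup.le_normalizer) ?_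
    intro z hz
    rw [Subgroup.mem_normalizer_iff]
    intro h
    have h1 := hZ z hz h
    constructor
    · intro hh
      simpa using L.mul_mem h1 hh
    · intro hh
      simpa [mul_assoc] using L.mul_mem (L.inv_mem h1) hh
  have hc : ∀ a : H, (QuotientGroup.mk' L a) ∈ Subgroup.center (H ⧸ L) := by
    have : (⊤ : Subgroup H) ≤ (Subgroup.center (H ⧸ L)).comap (QuotientGroup.mk' L) := by
      rw [← hi']
      refine sup_le ?_ ?_
      · intro k hk
        have : QuotientGroup.mk' L k = 1 := (QuotientGroup.eq_one_iff k).2 (hKL hk)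
        rw [Subgroup.mem_comap, this]
        exact one_mem _
      · intro z hz
        rw [Subgroup.mem_comap, Subgroup.mem_center_iff]
        intro g
        obtain ⟨g, rfl⟩ := QuotientGroup.mk'_surjective L g
        have h1 : QuotientGroup.mk' L (z * g * z⁻¹ * g⁻¹) = 1 :=
          (QuotientGroup.eq_one_iff _).2 (hZ z hz g)
        simp only [map_mul, map_inv] at h1
        rw [mul_inv_eq_one, mul_inv_eq_iff_eq_mul] at h1
        exact h1.symm
    exact fun a => this (Subgroup.mem_top a)
  refine ⟨H ⧸ L, { (inferInstance : Group (H ⧸ L)) with mul_comm := ?_ }, QuotientGroup.mk' L,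
    QuotientGroup.mk'_surjective L, ?_, ?_⟩
  · intro a b
    obtain ⟨b, rfl⟩ := QuotientGroup.mk'_surjective L b
    exact Subgroup.mem_center_iff.1 (hc b) a
  · intro h
    apply hi
    rw [eq_top_iff]
    intro x _
    exact (QuotientGroup.eq_one_iff x).1 (DFunLike.congr_fun h x)
  · intro k hk
    exact (QuotientGroup.eq_one_iff k).2 (hKL hk)
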